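/- Let Λ ⊆ {1,…,K} be such that G_Λ has linearly independent columns, let B ∈ ℂ^{N×ν}, λ > 0, and set X₀Λ = G_Λ† B and B_Λ = G_Λ X₀Λ, where G_Λ† = (G_Λ*G_Λ)^{−1}G_Λ*. Assume max_{j∉Λ} ‖(B − B_Λ)* g_j‖_{ℓ2} ≤ λ · ERC(Λ). Let X⋆ ∈ ℂ^{K×ν} be the matrix with rowsupp(X⋆) ⊆ Λ whose Λ-indexed rows form the unique minimizer of (1/2)‖B − G_Λ X‖_F² + λ J_{2,1}(X) over ℂ^{|Λ|×ν}. Then X⋆ is a global minimizer of L(X) = (1/2)‖B − GX‖_F² + λ J_{2,1}(X) over all of ℂ^{K×ν}; in particular, L attains its minimum at a matrix with row-support contained in Λ. -/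

import Mathlib

/-!
For a convex penalty `J`, a point `x` minimizes `½‖b - A x‖² + J x` if and only if the correlation
`Aᴴ (b - A x)` is a subgradient of `J` at `x`. As `λ J_{2,1}` is a sum over rows, this condition
decouples: the `k`-th row of `C = Gᴴ (B - G X)` has to be a subgradient of `λ‖·‖` at the `k`-th row
of `X`. Such a subgradient has norm at most `λ`, and at the zero vector every vector of norm at
most `λ` is one.

For `X⋆`, the rows of `C` in `Λ` are subgradients by optimality on `Λ`. For `j ∉ Λ` only
`‖C_j‖ ≤ λ` is needed. Since `G_Λ G_Λ†` is the orthogonal projection onto the range of `G_Λ`,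
`C_j = g_jᴴ (B - B_Λ) + (G_Λ† g_j)ᴴ C_Λ`, and the two terms are bounded by `λ ERC(Λ)` and
`‖G_Λ† g_j‖₁ λ ≤ (1 - ERC(Λ)) λ`.
-/

open Finset

/-- The `J_{2,1}` norm of a matrix: sum of the ℓ2 norms of its rows. -/
noncomputable def J21 {α β : Type*} [Fintype α] [Fintype β]
    (X : Matrix α β ℂ) : ℝ :=
  ∑ i, Real.sqrt (∑ t, ‖X i t‖ ^ 2)

/-- The Frobenius norm of a complex matrix. -/
noncomputable def frob {α β : Type*} [Fintype α] [Fintype β]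
    (X : Matrix α β ℂ) : ℝ :=
  Real.sqrt (∑ i, ∑ t, ‖X i t‖ ^ 2)

lemma le_of_forall_le_add_mul {a b c : ℝ} (h : ∀ t, 0 < t → t ≤ 1 → a ≤ b + t * c) : a ≤ b := by
  have hlim : Filter.Tendsto (fun t : ℝ => b + t * c) (nhdsWithin 0 (Set.Ioi 0)) (nhds b) :=
    (Continuous.tendsto' (by fun_prop) 0 b (by simp)).mono_left nhdsWithin_le_nhds
  refine ge_of_tendsto hlim ?_
  filter_upwards [Ioc_mem_nhdsGT one_pos] with t ht using h t ht.1 ht.2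

section ConvexQuadratic

open RCLike
open scoped InnerProductSpace

variable {𝕜 E F : Type*} [RCLike 𝕜] [AddCommGroup E] [Module 𝕜 E]
  [SeminormedAddCommGroup F] [InnerProductSpace 𝕜 F]

lemma half_norm_sub_map_add_sq (A : E →ₗ[𝕜] F) (b : F) (x d : E) :
    1 / 2 * ‖b - A (x + d)‖ ^ 2 =
      1 / 2 * ‖b - A x‖ ^ 2 - re ⟪b - A x, A d⟫_𝕜 + 1 / 2 * ‖A d‖ ^ 2 := by
  rw [map_add, ← sub_sub, norm_sub_sq (𝕜 := 𝕜)]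
  ring

variable [Module ℝ E] [IsScalarTower ℝ 𝕜 E]

theorem isMinOn_half_norm_sub_map_sq_add_iff {J : E → ℝ} (hJ : ConvexOn ℝ Set.univ J)
    (A : E →ₗ[𝕜] F) (b : F) (x : E) :
    IsMinOn (fun y => 1 / 2 * ‖b - A y‖ ^ 2 + J y) Set.univ x ↔
      ∀ d, re ⟪b - A x, A d⟫_𝕜 ≤ J (x + d) - J x := by
  rw [isMinOn_univ_iff]
  constructor
  · intro hmin d
    refine le_of_forall_le_add_mul (c := 1 / 2 * ‖A d‖ ^ 2) fun t ht0 ht1 => ?_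
    have hmin_t := hmin (x + (t : 𝕜) • d)
    have hconv : J (x + (t : 𝕜) • d) ≤ (1 - t) * J x + t * J (x + d) := by
      have hpoint : x + (t : 𝕜) • d = (1 - t) • x + t • (x + d) := by
        rw [← real_smul_eq_coe_smul]
        module
      rw [hpoint]
      exact hJ.2 trivial trivial (sub_nonneg.2 ht1) ht0.le (sub_add_cancel 1 t)
    have hlin : re ⟪b - A x, A ((t : 𝕜) • d)⟫_𝕜 = t * re ⟪b - A x, A d⟫_𝕜 := by
      rw [map_smul, inner_smul_right, re_ofReal_mul]
    have hquad : ‖A ((t : 𝕜) • d)‖ ^ 2 = t ^ 2 * ‖A d‖ ^ 2 := by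
      rw [map_smul, norm_smul, norm_ofReal, mul_pow, sq_abs]
    rw [half_norm_sub_map_add_sq, hlin, hquad] at hmin_t
    refine le_of_mul_le_mul_left ?_ ht0
    linarith
  · intro hsub y
    have hexp := half_norm_sub_map_add_sq A b x (y - x)
    have hsub_y := hsub (y - x)
    rw [add_sub_cancel] at hexp hsub_y
    linarith [sq_nonneg ‖A (y - x)‖]

end ConvexQuadratic

section Subgradient

open RCLike
open scoped InnerProductSpace

variable (𝕜 : Type*) {E : Type*} [RCLike 𝕜] [SeminormedAddCommGroup E] [InnerProductSpace 𝕜 E]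

/-- `u` is a subgradient at `z` of the function `c * ‖·‖`, where `E` is regarded as a real space
with inner product `re ⟪·, ·⟫`. Competitors are parametrized by their displacement `d` from `z`. -/
def IsNormSubgradient (c : ℝ) (u z : E) : Prop :=
  ∀ d, re ⟪u, d⟫_𝕜 ≤ c * (‖z + d‖ - ‖z‖)

variable {𝕜}

lemma IsNormSubgradient.norm_le {c : ℝ} (hc : 0 ≤ c) {u z : E} (h : IsNormSubgradient 𝕜 c u z) :
    ‖u‖ ≤ c := by
  have hsq : ‖u‖ * ‖u‖ ≤ c * ‖u‖ := calc
    ‖u‖ * ‖u‖ = re ⟪u, u⟫_𝕜 := by rw [inner_self_eq_norm_mul_norm]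
    _ ≤ c * (‖z + u‖ - ‖z‖) := h u
    _ ≤ c * ‖u‖ := by gcongr; linarith [norm_add_le z u]
  rcases (norm_nonneg u).eq_or_lt with hu | hu
  · rwa [← hu]
  · exact le_of_mul_le_mul_right hsq hu

lemma isNormSubgradient_zero_of_norm_le {c : ℝ} {u : E} (hu : ‖u‖ ≤ c) :
    IsNormSubgradient 𝕜 c u 0 := fun d => calc
  re ⟪u, d⟫_𝕜 ≤ ‖u‖ * ‖d‖ := re_inner_le_norm u d
  _ ≤ c * ‖d‖ := by gcongr
  _ = c * (‖0 + d‖ - ‖(0 : E)‖) := by simp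

end Subgradient

lemma forall_sum_apply_le_sum_apply_iff {ι : Type*} [Fintype ι] {E : ι → Type*} [∀ i, Zero (E i)]
    {f g : ∀ i, E i → ℝ} (hf : ∀ i, f i 0 = 0) (hg : ∀ i, g i 0 = 0) :
    (∀ x : ∀ i, E i, ∑ i, f i (x i) ≤ ∑ i, g i (x i)) ↔ ∀ i y, f i y ≤ g i y := by
  classical
  refine ⟨fun h i y => ?_, fun h x => sum_le_sum fun i _ => h i (x i)⟩
  have sum_single {φ : ∀ i, E i → ℝ} (hφ : ∀ i, φ i 0 = 0) :
      ∑ k, φ k (Pi.single i y k) = φ i y := by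
    rw [Fintype.sum_eq_single i fun k hk => by rw [Pi.single_eq_of_ne hk, hφ], Pi.single_eq_same]
  simpa only [sum_single hf, sum_single hg] using h (Pi.single i y)

section Rows

open scoped InnerProductSpace Matrix

variable {𝕜 l m n : Type*} [RCLike 𝕜]

/-- The rows of a matrix as vectors of a Euclidean space. The tuple of rows lives in the
`ℓ²` product, so that the norm of `rowVecs X` is the Frobenius norm of `X`. -/
noncomputable def rowVecs : Matrix m n 𝕜 ≃ₗ[𝕜] PiLp 2 (fun _ : m => EuclideanSpace 𝕜 n) where
  toFun X := WithLp.toLp 2 fun i => WithLp.toLp 2 (X i)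
  invFun x := Matrix.of fun i t => x i t
  map_add' _ _ := rfl
  map_smul' _ _ := rfl
  left_inv _ := rfl
  right_inv _ := rfl

lemma rowVecs_mul_apply [Fintype l] (A : Matrix m l 𝕜) (X : Matrix l n 𝕜) (i : m) :
    rowVecs (A * X) i = ∑ k, A i k • rowVecs X k := by
  have hrow : (A * X) i = ∑ k, A i k • X k := by
    rw [Matrix.mul_apply_eq_vecMul, Matrix.vecMul_eq_sum]
  exact (congrArg (WithLp.toLp 2) hrow).trans (WithLp.toLp_sum 2 _ _ _)

variable [Fintype n]

lemma norm_rowVecs_apply (X : Matrix m n 𝕜) (i : m) :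
    ‖rowVecs X i‖ = Real.sqrt (∑ t, ‖X i t‖ ^ 2) :=
  EuclideanSpace.norm_eq _

lemma norm_rowVecs_mul_apply_le [Fintype l] (A : Matrix m l 𝕜) {X : Matrix l n 𝕜} {c : ℝ}
    (hX : ∀ k, ‖rowVecs X k‖ ≤ c) (i : m) : ‖rowVecs (A * X) i‖ ≤ (∑ k, ‖A i k‖) * c := by
  rw [rowVecs_mul_apply, sum_mul]
  refine norm_sum_le_of_le _ fun k _ => ?_
  rw [norm_smul]
  gcongr
  exact hX k

lemma norm_rowVecs_conjTranspose_mul_apply [Fintype l] (G : Matrix l m 𝕜) (R : Matrix l n 𝕜)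
    (j : m) : ‖rowVecs (Gᴴ * R) j‖ = Real.sqrt (∑ t, ‖∑ i, star (R i t) * G i j‖ ^ 2) := by
  have hentry (t : n) : ‖(Gᴴ * R) j t‖ = ‖∑ i, star (R i t) * G i j‖ := by
    rw [← norm_star, Matrix.mul_apply, star_sum]
    simp only [star_mul, Matrix.conjTranspose_apply, star_star]
  simp only [norm_rowVecs_apply, hentry]

variable [Fintype m]

lemma J21_eq_sum_norm_rowVecs (X : Matrix m n ℂ) : J21 X = ∑ i, ‖rowVecs X i‖ := by
  simp only [J21, norm_rowVecs_apply]

lemma frob_eq_norm_rowVecs (X : Matrix m n ℂ) : frob X = ‖rowVecs X‖ := by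
  rw [PiLp.norm_eq_of_L2, frob]
  simp only [norm_rowVecs_apply, Real.sq_sqrt (sum_nonneg fun _ _ => sq_nonneg _)]

lemma convexOn_J21 : ConvexOn ℝ Set.univ (J21 : Matrix m n ℂ → ℝ) := by
  have hJ : (J21 : Matrix m n ℂ → ℝ) = fun X => ∑ i, ‖rowVecs X i‖ :=
    funext J21_eq_sum_norm_rowVecs
  refine ⟨convex_univ, fun X _ Y _ a b ha hb _ => ?_⟩
  simp only [hJ, smul_eq_mul, mul_sum, ← sum_add_distrib]
  refine sum_le_sum fun i _ => (norm_add_le (a • rowVecs X i) (b • rowVecs Y i)).trans_eq ?_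
  rw [norm_smul_of_nonneg ha, norm_smul_of_nonneg hb]

lemma inner_rowVecs_mul [Fintype l] (R : Matrix l n 𝕜) (A : Matrix l m 𝕜) (D : Matrix m n 𝕜) :
    ⟪rowVecs R, rowVecs (A * D)⟫_𝕜 = ⟪rowVecs (Aᴴ * R), rowVecs D⟫_𝕜 := by
  rw [PiLp.inner_apply, PiLp.inner_apply]
  simp only [rowVecs_mul_apply, inner_sum, sum_inner, inner_smul_left, inner_smul_right,
    Matrix.conjTranspose_apply, RCLike.star_def, RCLike.conj_conj]
  exact sum_comm

end Rows

/-- The submatrix `A_s` of the columns of `A` indexed by `s`. -/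
abbrev colSubmatrix {R m p : Type*} (A : Matrix m p R) (s : Finset p) : Matrix m s R :=
  A.submatrix id (↑)

lemma mul_eq_colSubmatrix_mul_submatrix {R m n p : Type*} [NonUnitalNonAssocSemiring R]
    [Fintype p] {s : Finset p} (A : Matrix m p R) {X : Matrix p n R} (hX : ∀ i ∉ s, X i = 0) :
    A * X = colSubmatrix A s * X.submatrix ((↑) : s → p) id := by
  ext i t
  simp only [Matrix.mul_apply, Matrix.submatrix_apply, id_eq]
  rw [sum_coe_sort s fun k => A i k * X k t]
  exact (sum_subset (subset_univ s) fun k _ hk => by simp [hX k hk]).symm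

section GroupLasso

open scoped InnerProductSpace Matrix

variable {m n p : Type*} [Fintype m] [Fintype n] [Fintype p]

/-- The group lasso (Lagrangian) objective `½‖B - A X‖_F² + c J_{2,1}(X)`. -/
noncomputable def groupLasso (A : Matrix m p ℂ) (B : Matrix m n ℂ) (c : ℝ) (X : Matrix p n ℂ) : ℝ :=
  1 / 2 * frob (B - A * X) ^ 2 + c * J21 X

theorem isMinOn_groupLasso_iff {A : Matrix m p ℂ} {B : Matrix m n ℂ} {c : ℝ} (hc : 0 ≤ c)
    {X : Matrix p n ℂ} :
    IsMinOn (groupLasso A B c) Set.univ X ↔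
      ∀ k, IsNormSubgradient ℂ c (rowVecs (Aᴴ * (B - A * X)) k) (rowVecs X k) := by
  have hobj : groupLasso A B c = fun Y => 1 / 2 *
      ‖rowVecs B - (rowVecs.toLinearMap ∘ₗ mulLeftLinearMap n ℂ A) Y‖ ^ 2 + c • J21 Y := by
    ext Y
    simp [groupLasso, frob_eq_norm_rowVecs]
  have hinner (D : Matrix p n ℂ) :
      RCLike.re ⟪rowVecs B - rowVecs (A * X), rowVecs (A * D)⟫_ℂ =
        ∑ k, RCLike.re ⟪rowVecs (Aᴴ * (B - A * X)) k, rowVecs D k⟫_ℂ := by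
    rw [← map_sub, inner_rowVecs_mul, PiLp.inner_apply, map_sum]
  have hpenalty (D : Matrix p n ℂ) : c * J21 (X + D) - c * J21 X =
      ∑ k, c * (‖rowVecs X k + rowVecs D k‖ - ‖rowVecs X k‖) := by
    simp only [J21_eq_sum_norm_rowVecs, map_add, PiLp.add_apply, ← mul_sum, sum_sub_distrib,
      mul_sub]
  rw [hobj, isMinOn_half_norm_sub_map_sq_add_iff (convexOn_J21.smul hc)]
  unfold IsNormSubgradient
  rw [← forall_sum_apply_le_sum_apply_iff (by simp) (by simp),
    ← (rowVecs.toEquiv.trans (WithLp.equiv 2 _)).forall_congr_right]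
  refine forall_congr' fun D => ?_
  exact iff_of_eq (congrArg₂ (· ≤ ·) (hinner D) (hpenalty D))

theorem isMinOn_groupLasso_of_isMinOn_colSubmatrix {A : Matrix m p ℂ} {B : Matrix m n ℂ} {c : ℝ}
    (hc : 0 ≤ c) {s : Finset p} {X : Matrix p n ℂ} (hX : ∀ i ∉ s, X i = 0)
    (hmin : IsMinOn (groupLasso (colSubmatrix A s) B c) Set.univ (X.submatrix ((↑) : s → p) id))
    (hdual : ∀ j ∉ s, ‖rowVecs (Aᴴ * (B - A * X)) j‖ ≤ c) :
    IsMinOn (groupLasso A B c) Set.univ X := by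
  rw [isMinOn_groupLasso_iff hc] at hmin ⊢
  rw [← mul_eq_colSubmatrix_mul_submatrix A hX] at hmin
  intro k
  by_cases hk : k ∈ s
  · exact hmin ⟨k, hk⟩
  · have hXk : rowVecs X k = 0 := congrArg (WithLp.toLp 2) (hX k hk)
    rw [hXk]
    exact isNormSubgradient_zero_of_norm_le (hdual k hk)

end GroupLasso

section LeftPinv

open scoped Matrix

variable {𝕜 m n p q : Type*} [RCLike 𝕜] [Fintype m] [Fintype p] [DecidableEq p]

/-- The pseudo-inverse `A† = (Aᴴ A)⁻¹ Aᴴ` of a matrix with linearly independent columns. It is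
the zero matrix if the columns are linearly dependent, because of the junk value of `⁻¹`. -/
noncomputable def leftPinv (A : Matrix m p 𝕜) : Matrix p m 𝕜 :=
  (Aᴴ * A)⁻¹ * Aᴴ

open scoped ComplexOrder in
lemma leftPinv_mul_self {A : Matrix m p 𝕜} (hA : LinearIndependent 𝕜 A.col) :
    leftPinv A * A = 1 := by
  have hpos : (Aᴴ * A).PosDef := .conjTranspose_mul_self A (Matrix.mulVec_injective_iff.2 hA)
  rw [leftPinv, Matrix.mul_assoc,
    Matrix.nonsing_inv_mul _ ((Matrix.isUnit_iff_isUnit_det _).1 hpos.isUnit)]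

lemma isHermitian_mul_leftPinv (A : Matrix m p 𝕜) : (A * leftPinv A).IsHermitian := by
  rw [leftPinv, ← Matrix.mul_assoc]
  exact Matrix.isHermitian_mul_mul_conjTranspose A (Matrix.isHermitian_conjTranspose_mul_self A).inv

lemma conjTranspose_mul_residual_eq_add {A : Matrix m p 𝕜} (hA : LinearIndependent 𝕜 A.col)
    (G : Matrix m q 𝕜) (B : Matrix m n 𝕜) (Z : Matrix p n 𝕜) :
    Gᴴ * (B - A * Z) =
      Gᴴ * (B - A * (leftPinv A * B)) + (leftPinv A * G)ᴴ * (Aᴴ * (B - A * Z)) := by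
  have hproj : (leftPinv A)ᴴ * Aᴴ = A * leftPinv A := by
    rw [← Matrix.conjTranspose_mul, isHermitian_mul_leftPinv]
  have hsplit : B - A * Z = (B - A * (leftPinv A * B)) + A * leftPinv A * (B - A * Z) := by
    rw [Matrix.mul_sub, Matrix.mul_assoc, Matrix.mul_assoc, ← Matrix.mul_assoc _ A Z,
      leftPinv_mul_self hA, Matrix.one_mul]
    abel
  rw [Matrix.conjTranspose_mul, Matrix.mul_assoc, ← Matrix.mul_assoc _ Aᴴ, hproj,
    ← Matrix.mul_add, ← hsplit]

end LeftPinv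

section ExactRecovery

open scoped Matrix

variable {𝕜 m p n : Type*} [RCLike 𝕜] [Fintype m] [DecidableEq p] [Fintype n]

/-- The exact recovery coefficient `1 - max_{j ∉ s} ‖A_s† a_j‖₁` of a set `s` of columns `a_j` of
`A`, meant for finitely many columns. It equals `1` if `s` contains all of them, as the supremum
over an empty type is `0`. -/
noncomputable def exactRecoveryCoeff (A : Matrix m p 𝕜) (s : Finset p) : ℝ :=
  1 - ⨆ j : {j // j ∉ s}, ∑ i, ‖(leftPinv (colSubmatrix A s)).mulVec (A.col j) i‖

variable [Finite p] {A : Matrix m p 𝕜} {s : Finset p} {j : p}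

lemma sum_norm_leftPinv_mulVec_col_le (hj : j ∉ s) :
    ∑ i, ‖(leftPinv (colSubmatrix A s)).mulVec (A.col j) i‖ ≤ 1 - exactRecoveryCoeff A s := by
  rw [exactRecoveryCoeff, sub_sub_cancel]
  exact le_ciSup (f := fun j : {j // j ∉ s} =>
    ∑ i, ‖(leftPinv (colSubmatrix A s)).mulVec (A.col j) i‖)
    (Set.finite_range _).bddAbove ⟨j, hj⟩

theorem norm_rowVecs_residual_le_of_exactRecoveryCoeff
    (hind : LinearIndependent 𝕜 (colSubmatrix A s).col) (B : Matrix m n 𝕜) (Z : Matrix s n 𝕜)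
    {c : ℝ} (hc : 0 ≤ c)
    (hZ : ∀ i, ‖rowVecs ((colSubmatrix A s)ᴴ * (B - colSubmatrix A s * Z)) i‖ ≤ c) (hj : j ∉ s)
    (hB : ‖rowVecs (Aᴴ * (B - colSubmatrix A s * (leftPinv (colSubmatrix A s) * B))) j‖ ≤
      c * exactRecoveryCoeff A s) :
    ‖rowVecs (Aᴴ * (B - colSubmatrix A s * Z)) j‖ ≤ c := by
  have hcoeff : ∑ i, ‖(leftPinv (colSubmatrix A s) * A)ᴴ j i‖ ≤ 1 - exactRecoveryCoeff A s := by
    simp only [Matrix.conjTranspose_apply, norm_star]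
    exact sum_norm_leftPinv_mulVec_col_le hj
  rw [conjTranspose_mul_residual_eq_add hind A B Z, map_add, PiLp.add_apply]
  calc
    ‖_ + _‖ ≤ c * exactRecoveryCoeff A s +
        (∑ i, ‖(leftPinv (colSubmatrix A s) * A)ᴴ j i‖) * c :=
      norm_add_le_of_le hB (norm_rowVecs_mul_apply_le _ hZ j)
    _ ≤ c * exactRecoveryCoeff A s + (1 - exactRecoveryCoeff A s) * c := by gcongr
    _ = c := by ring

end ExactRecovery

/-- Let `Λ` index linearly independent columns of `G`, let
`X₀Λ = G_Λ† B`, `B_Λ = G_Λ X₀Λ`, and assume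
`max_{j∉Λ} ‖(B − B_Λ)* g_j‖₂ ≤ λ ERC(Λ)`. If `X⋆` has row-support inside `Λ` and its
`Λ`-indexed rows form the (unique) minimizer of the `Λ`-restricted Lagrangian
`½‖B − G_Λ X‖_F² + λ J_{2,1}(X)`, then `X⋆` is a global minimizer of
`L(X) = ½‖B − GX‖_F² + λ J_{2,1}(X)` over `ℂ^{K×ν}`. -/
theorem erc_condition_global_minimizer_supported
    (N K ν : ℕ) (hN : 0 < N) (hK : 0 < K) (hν : 0 < ν)
    (G : Matrix (Fin N) (Fin K) ℂ) (Λ : Finset (Fin K))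
    (hind : LinearIndependent ℂ (fun j : ↥Λ => fun i => G i (j : Fin K)))
    (B : Matrix (Fin N) (Fin ν) ℂ) (lam : ℝ) (hlam : 0 < lam)
    (GΛ : Matrix (Fin N) ↥Λ ℂ) (hGΛ : GΛ = Matrix.of fun (i : Fin N) (j : ↥Λ) => G i (j : Fin K))
    (Gpinv : Matrix ↥Λ (Fin N) ℂ)
    (hGpinv : Gpinv = (GΛ.conjTranspose * GΛ)⁻¹ * GΛ.conjTranspose)
    (X0Λ : Matrix ↥Λ (Fin ν) ℂ) (hX0Λ : X0Λ = Gpinv * B)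
    (BΛ : Matrix (Fin N) (Fin ν) ℂ) (hBΛ : BΛ = GΛ * X0Λ)
    (ERC : ℝ)
    (hERC : ERC = 1 - ⨆ j : {j : Fin K // j ∉ Λ},
      ∑ i : ↥Λ, ‖Gpinv.mulVec (fun n => G n (j : Fin K)) i‖)
    (hcond : ∀ j ∉ Λ,
      Real.sqrt (∑ t, ‖∑ i, (starRingEnd ℂ) ((B - BΛ) i t) * G i j‖ ^ 2) ≤
        lam * ERC)
    (Xstar : Matrix (Fin K) (Fin ν) ℂ)
    (hsupp : ∀ i ∉ Λ, Xstar i = 0)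
    (hminΛ : ∀ Y : Matrix ↥Λ (Fin ν) ℂ,
      (1 / 2) * (frob (B - GΛ * Matrix.of (fun (i : ↥Λ) t => Xstar (i : Fin K) t))) ^ 2 +
          lam * J21 (Matrix.of (fun (i : ↥Λ) t => Xstar (i : Fin K) t)) ≤
        (1 / 2) * (frob (B - GΛ * Y)) ^ 2 + lam * J21 Y) :
    ∀ X : Matrix (Fin K) (Fin ν) ℂ,
      (1 / 2) * (frob (B - G * Xstar)) ^ 2 + lam * J21 Xstar ≤
        (1 / 2) * (frob (B - G * X)) ^ 2 + lam * J21 X := by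
  obtain rfl : GΛ = colSubmatrix G Λ := hGΛ
  subst hGpinv hX0Λ hBΛ hERC
  have hmin : IsMinOn (groupLasso (colSubmatrix G Λ) B lam) Set.univ (Xstar.submatrix (↑) id) :=
    isMinOn_univ_iff.2 hminΛ
  have hsub := (isMinOn_groupLasso_iff hlam.le).1 hmin
  have hdual : ∀ j ∉ Λ, ‖rowVecs (G.conjTranspose * (B - G * Xstar)) j‖ ≤ lam := by
    intro j hj
    rw [mul_eq_colSubmatrix_mul_submatrix G hsupp]
    refine norm_rowVecs_residual_le_of_exactRecoveryCoeff hind B _ hlam.le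
      (fun i => (hsub i).norm_le hlam.le) hj ?_
    rw [norm_rowVecs_conjTranspose_mul_apply]
    exact hcond j hj
  exact isMinOn_univ_iff.1 (isMinOn_groupLasso_of_isMinOn_colSubmatrix hlam.le hsupp hmin hdual)
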